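/- (Morse's lemma with parameters and constant rank.) Let f ∈ C^∞(ℝ^d × ℝ^d) and let 0 ≤ n ≤ d. Suppose that for all t in a neighborhood of 0: f(0,t) = 0 and ∇_x f(0,t) = 0, and that the Hessian in x, Δ_x f(x,t), has rank exactly n for all (x,t) in a neighborhood of (0,0). Let m be the number of positive eigenvalues of Δ_x f(0,0). Then there exist neighborhoods V, W of 0 in ℝ^d and a smooth map τ : V × W → ℝ^d such that τ(0,t) = 0 for all t ∈ W, the Jacobian determinant det J_x τ(x,t) is nonzero for all (x,t) ∈ V × W, and f(x,t) = Q_{m,n}(τ(x,t)) for all (x,t) ∈ V × W. -/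

import Mathlib

open MeasureTheory Real Set

/-- The quadratic form `Q_{m,n}(y) = Σ_{j<m} y_j² − Σ_{m≤j<n} y_j²` on `ℝ^d`. -/
noncomputable def Qmn (d m n : ℕ) (y : EuclideanSpace ℝ (Fin d)) : ℝ :=
  ∑ j : Fin d, if (j : ℕ) < m then y j ^ 2 else if (j : ℕ) < n then -(y j ^ 2) else 0

/-- The Hessian matrix in the first variable of `f : ℝ^d × ℝ^d → ℝ`. -/
noncomputable def hessX (d : ℕ)
    (f : EuclideanSpace ℝ (Fin d) × EuclideanSpace ℝ (Fin d) → ℝ)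
    (x t : EuclideanSpace ℝ (Fin d)) : Matrix (Fin d) (Fin d) ℝ :=
  Matrix.of fun i j =>
    fderiv ℝ (fun x' => fderiv ℝ (fun x'' => f (x'', t)) x' (EuclideanSpace.single j 1)) x
      (EuclideanSpace.single i 1)

/-!
The idea is a Lyapunov–Schmidt reduction followed by the usual proof of Morse's lemma. Let `R` be
the range of the Hessian `H` in `x` at the origin. As `H` is invertible on `R`, the implicit
function theorem yields `u (x, t) ∈ R`, vanishing for `x = 0`, such that the gradient in `x` at
`(x - u (x, t), t)` has zero projection to `R`. Near the origin the Hessians have rank `dim R`, so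
this projection is injective on their ranges and the gradient at `(x - u (x, t), t)` is constant
along the fibres. It therefore vanishes, and so does `f` there. Taylor's formula from that point
gives `f = ½ ⟪A u, u⟫`, where `A` is a weighted mean of Hessians compressed to `R` and depends
smoothly on `(x, t)`. The implicit function theorem also solves the congruence `A = β* H β` on `R`
by a smooth `β` with `β = 1` at `A = H`. Hence `f = ½ ⟪H y, y⟫` with `y = β u`, and adding to `y`
the projection of `x` to `Rᗮ` gives a change of variables. By Sylvester's law of inertia, a linear
change of variables turns `½ H` into `Q_{m,n}`.
-/

section
open Filter Topology
open scoped ContDiff InnerProductSpace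

section ParametricIntegral

variable {X Y : Type*} [NormedAddCommGroup X] [NormedSpace ℝ X]
  [NormedAddCommGroup Y] [NormedSpace ℝ Y]

lemma hasFDerivAt_intervalIntegral_of_continuous {K : X → ℝ → Y} {K' : X → ℝ → X →L[ℝ] Y}
    (hK : Continuous ↿K) (hK' : Continuous ↿K')
    (hderiv : ∀ x s, HasFDerivAt (K · s) (K' x s) x) (a b : ℝ) (x₀ : X) :
    HasFDerivAt (fun x => ∫ s in a..b, K x s) (∫ s in a..b, K' x₀ s) x₀ := by
  have hK'₀ : Continuous (K' x₀) := hK'.comp (.prodMk_right x₀)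
  have bounded : ∀ᶠ x in 𝓝 x₀, ∀ s ∈ uIcc a b, ‖K' x s‖ < ‖K' x₀ s‖ + 1 := by
    refine isCompact_uIcc.eventually_forall_of_forall_eventually fun s _ => ?_
    exact (hK'.norm.tendsto (x₀, s)).eventually_lt
      (((hK'₀.norm.comp continuous_snd).add_const 1).tendsto (x₀, s)) (lt_add_one _)
  refine intervalIntegral.hasFDerivAt_integral_of_dominated_of_fderiv_le bounded
    (.of_forall fun x => (hK.comp (.prodMk_right x)).aestronglyMeasurable)
    ((hK.comp (.prodMk_right x₀)).intervalIntegrable _ _) hK'₀.aestronglyMeasurable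
    (.of_forall fun s hs x hx => (hx s (uIoc_subset_uIcc hs)).le)
    ((hK'₀.norm.add_const 1).intervalIntegrable _ _)
    (.of_forall fun s _ x _ => hderiv x s)

lemma multilinear_intervalIntegral_apply [CompleteSpace Y] {k : ℕ} {g : ℝ → X [×k]→L[ℝ] Y}
    {a b : ℝ} (hg : IntervalIntegrable g volume a b) (v : Fin k → X) :
    (∫ s in a..b, g s) v = ∫ s in a..b, g s v :=
  ((ContinuousMultilinearMap.apply ℝ (fun _ => X) Y v).intervalIntegral_comp_comm hg).symm

lemma intervalIntegral_curryLeft [CompleteSpace Y] {k : ℕ} {g : ℝ → X [×(k + 1)]→L[ℝ] Y}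
    (hg : Continuous g) (a b : ℝ) :
    ∫ s in a..b, (g s).curryLeft = (∫ s in a..b, g s).curryLeft := by
  have hcurry : Continuous fun s => (g s).curryLeft :=
    (continuousMultilinearCurryLeftEquiv ℝ (fun _ => X) Y).continuous.comp hg
  ext x v
  rw [ContinuousLinearMap.intervalIntegral_apply (hcurry.intervalIntegrable a b),
    multilinear_intervalIntegral_apply ((hcurry.clm_apply continuous_const).intervalIntegrable a b),
    ContinuousMultilinearMap.curryLeft_apply,
    multilinear_intervalIntegral_apply (hg.intervalIntegrable a b)]
  rfl

lemma contDiff_intervalIntegral [CompleteSpace Y] {n : ℕ∞} {K : X → ℝ → Y}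
    (hK : ContDiff ℝ n ↿K) (a b : ℝ) : ContDiff ℝ n (fun x => ∫ s in a..b, K x s) := by
  have taylor := hK.ftaylorSeries
  let restrict (k : ℕ) := ContinuousMultilinearMap.compContinuousLinearMapL (𝕜 := ℝ) (F := Y)
    (fun _ : Fin k => ContinuousLinearMap.inl ℝ X ℝ)
  let q (x : X) (s : ℝ) (k : ℕ) : X [×k]→L[ℝ] Y := restrict k (ftaylorSeries ℝ ↿K (x, s) k)
  have hq (k : ℕ) (hk : k ≤ n) : Continuous ↿(fun x s => q x s k) :=
    (restrict k).continuous.comp (taylor.cont k (by exact_mod_cast hk))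
  have hq₁ (k : ℕ) (hk : k ≤ n) (x : X) : Continuous (q x · k) := (hq k hk).comp (.prodMk_right x)
  refine HasFTaylorSeriesUpTo.contDiff (f' := fun x k => ∫ s in a..b, q x s k)
    ⟨fun x => ?_, fun k hk x => ?_, fun k hk => ?_⟩
  · exact multilinear_intervalIntegral_apply ((hq₁ 0 zero_le x).intervalIntegrable a b) 0
  · have hk : k < n := by exact_mod_cast hk
    have hk' : (k.succ : ℕ∞) ≤ n := by exact_mod_cast Order.add_one_le_of_lt hk
    have hderiv (x : X) (s : ℝ) : HasFDerivAt (q · s k) (q x s k.succ).curryLeft x := by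
      have slice : HasFDerivAt (fun x => ftaylorSeries ℝ ↿K (x, s) k)
          ((ftaylorSeries ℝ ↿K (x, s) k.succ).curryLeft ∘L .inl ℝ X ℝ) x :=
        (taylor.fderiv k (by exact_mod_cast hk) (x, s)).comp x (hasFDerivAt_prodMk_left x s)
      exact (restrict k).hasFDerivAt.comp x slice
    rw [← intervalIntegral_curryLeft (hq₁ _ hk' x)]
    exact hasFDerivAt_intervalIntegral_of_continuous (hq k hk.le)
      ((continuousMultilinearCurryLeftEquiv ℝ (fun _ => X) Y).continuous.comp (hq _ hk'))
      hderiv a b x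
  · exact intervalIntegral.continuous_parametric_intervalIntegral_of_continuous'
      (hq k (by exact_mod_cast hk)) a b

end ParametricIntegral

section Implicit

variable {X Y Z : Type*} [NormedAddCommGroup X] [NormedSpace ℝ X] [CompleteSpace X]
  [NormedAddCommGroup Y] [NormedSpace ℝ Y] [CompleteSpace Y]
  [NormedAddCommGroup Z] [NormedSpace ℝ Z] [CompleteSpace Z]

lemma exists_implicit_contDiff {n : WithTop ℕ∞} (hn : n ≠ 0)
    {Θ : X × Y → Z} (hΘ : ContDiff ℝ n Θ) {z : X × Y}
    (hinv : (fderiv ℝ Θ z ∘L .inr ℝ X Y).IsInvertible) :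
    ∃ φ : X → Y, φ z.1 = z.2 ∧ (∀ᶠ x in 𝓝 z.1, ContDiffAt ℝ n φ x) ∧
      ∀ᶠ v in 𝓝 z, Θ v = Θ z ↔ φ v.1 = v.2 := by
  set φ := hΘ.contDiffAt.implicitFunction hn hinv
  have hφz : φ z.1 = z.2 := hΘ.contDiffAt.implicitFunction_apply_self hn hinv
  have unique : ∀ᶠ v in 𝓝 z, Θ v = Θ z ↔ φ v.1 = v.2 :=
    hΘ.contDiffAt.eventually_apply_eq_iff_implicitFunction hn hinv
  have cont : ContinuousAt φ z.1 := (hΘ.contDiffAt.contDiffAt_implicitFunction hn hinv).continuousAt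
  have graph : Tendsto (fun x => (x, φ x)) (𝓝 z.1) (𝓝 z) := by
    simpa only [id, hφz] using (continuousAt_id.prodMk cont).tendsto
  have invertible : ∀ᶠ v in 𝓝 z, (fderiv ℝ Θ v ∘L .inr ℝ X Y).IsInvertible :=
    (((hΘ.continuous_fderiv hn).clm_comp_const _).tendsto z).eventually
      (ContinuousLinearEquiv.isOpen.mem_nhds hinv)
  refine ⟨φ, hφz, ?_, unique⟩
  filter_upwards [graph.eventually invertible, graph.eventually unique.eventually_nhds]
    with x hx unique_x
  set ψ := hΘ.contDiffAt.implicitFunction hn hx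
  have hψx : ψ x = φ x := hΘ.contDiffAt.implicitFunction_apply_self hn hx
  have hψ : ContDiffAt ℝ n ψ x := hΘ.contDiffAt.contDiffAt_implicitFunction hn hx
  have graph_ψ : Tendsto (fun y => (y, ψ y)) (𝓝 x) (𝓝 (x, φ x)) := by
    simpa only [id, hψx] using (continuousAt_id.prodMk hψ.continuousAt).tendsto
  have hΘx : Θ (x, φ x) = Θ z := unique_x.self_of_nhds.2 rfl
  have solves : ∀ᶠ y in 𝓝 x, Θ (y, ψ y) = Θ z := by
    simpa only [hΘx] using hΘ.contDiffAt.eventually_apply_implicitFunction hn hx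
  refine hψ.congr_of_eventuallyEq ?_
  filter_upwards [graph_ψ.eventually unique_x, solves] with y hy hΘy using hy.1 hΘy

end Implicit

section Congruence

variable {R : Type*} [NormedRing R] [NormedAlgebra ℝ R]

lemma hasFDerivAt_mul_mul_self_zero (c : R) :
    HasFDerivAt (fun s => s * c * s) (0 : R →L[ℝ] R) 0 :=
  (((hasFDerivAt_id (0 : R)).mul_const' c).mul' (hasFDerivAt_id (0 : R))).congr_fderiv (by simp)

variable [CompleteSpace R] [StarRing R] [StarModule ℝ R] [ContinuousStar R]

lemma exists_contDiffAt_star_mul_mul_eq {a : R} (ha : IsSelfAdjoint a) (hunit : IsUnit a) :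
    ∃ β : R → R, β a = 1 ∧ (∀ᶠ b in 𝓝 a, ContDiffAt ℝ ∞ β b) ∧
      ∀ᶠ b in 𝓝 a, IsSelfAdjoint b → star (β b) * a * β b = b := by
  obtain ⟨u, rfl⟩ := hunit
  have hu' : star (↑u⁻¹ : R) = ↑u⁻¹ := by
    rw [← Units.coe_star, star_inv, Units.ext (u := star u) ha]
  -- With `β b = 1 + u⁻¹ s / 2` and `s` self-adjoint, the congruence reads `Θ (b, s) = 0`.
  let Θ : R × R → R := fun v => v.2 + (1 / 4 : ℝ) • (v.2 * ↑u⁻¹ * v.2) - v.1 + u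
  have hΘ : ContDiff ℝ ∞ Θ := by fun_prop
  have hΘ₀ : Θ (↑u, 0) = 0 := by simp [Θ]
  have hderiv : fderiv ℝ Θ (↑u, 0) ∘L .inr ℝ R R = .id ℝ R := by
    have slice : HasFDerivAt (fun s => Θ (↑u, s)) (.id ℝ R) 0 :=
      (((((hasFDerivAt_id (0 : R)).add ((hasFDerivAt_mul_mul_self_zero (↑u⁻¹ : R)).const_smul
        (1 / 4 : ℝ))).sub_const (u : R)).add_const (u : R))).congr_fderiv (by simp)
    exact HasFDerivAt.unique ((hΘ.differentiable (by simp) _).hasFDerivAt.comp 0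
      (hasFDerivAt_prodMk_right (u : R) (0 : R))) slice
  obtain ⟨φ, hφ₀, hφ, hφΘ⟩ := exists_implicit_contDiff (by simp) hΘ (z := (↑u, 0))
    (hderiv ▸ ⟨.refl ℝ R, rfl⟩)
  simp only [hΘ₀] at hφ₀ hφ hφΘ
  have lim : Tendsto φ (𝓝 ↑u) (𝓝 0) := hφ₀ ▸ hφ.self_of_nhds.continuousAt.tendsto
  have lim_star : Tendsto (fun b => star (φ b)) (𝓝 ↑u) (𝓝 0) := by
    simpa only [star_zero] using lim.star
  refine ⟨fun b => 1 + (1 / 2 : ℝ) • (↑u⁻¹ * φ b), by simp [hφ₀], ?_, ?_⟩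
  · filter_upwards [hφ] with b hb using by fun_prop
  filter_upwards [(tendsto_id.prodMk_nhds lim).eventually hφΘ,
    (tendsto_id.prodMk_nhds lim_star).eventually hφΘ] with b hb hb' hbsa
  have root : Θ (b, φ b) = 0 := hb.2 rfl
  have hφb : star (φ b) = φ b := by
    refine (hb'.1 ?_).symm
    simpa [Θ, hu', hbsa.star_eq, ha.star_eq, mul_assoc] using congrArg star root
  rw [star_add, star_one, star_smul, star_mul, hφb, hu']
  calc (1 + star (1 / 2 : ℝ) • (φ b * ↑u⁻¹)) * ↑u * (1 + (1 / 2 : ℝ) • (↑u⁻¹ * φ b))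
      = Θ (b, φ b) + b := by
        simp only [add_mul, mul_add, Algebra.smul_mul_assoc, Algebra.mul_smul_comm, mul_assoc,
          one_mul, mul_one, Units.mul_inv_cancel_left, Units.inv_mul, star_trivial, Θ]
        module
    _ = b := by rw [root, zero_add]

lemma exists_contDiffAt_inner_apply_eq {G : Type*} [NormedAddCommGroup G] [InnerProductSpace ℝ G]
    [CompleteSpace G] {T : G →L[ℝ] G} (hT : IsSelfAdjoint T) (hunit : IsUnit T) :
    ∃ β : (G →L[ℝ] G) → G →L[ℝ] G, β T = 1 ∧ (∀ᶠ S in 𝓝 T, ContDiffAt ℝ ∞ β S) ∧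
      ∀ᶠ S in 𝓝 T, IsSelfAdjoint S → ∀ v, ⟪T (β S v), β S v⟫_ℝ = ⟪S v, v⟫_ℝ := by
  obtain ⟨β, hβ₁, hβ, hcongr⟩ := exists_contDiffAt_star_mul_mul_eq hT hunit
  refine ⟨β, hβ₁, hβ, hcongr.mono fun S hS hSsa v => ?_⟩
  nth_rewrite 3 [← hS hSsa]
  rw [mul_assoc, ContinuousLinearMap.star_eq_adjoint, mul_apply_eq_comp,
    ContinuousLinearMap.adjoint_inner_left, mul_apply_eq_comp]

end Congruence

section PartialDerivatives

variable {X E F Y : Type*} [NormedAddCommGroup X] [NormedSpace ℝ X]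
  [NormedAddCommGroup E] [InnerProductSpace ℝ E] [CompleteSpace E]
  [NormedAddCommGroup F] [NormedSpace ℝ F] [NormedAddCommGroup Y] [NormedSpace ℝ Y]

lemma hasFDerivAt_slice {g : X × F → Y} {p : X × F} (hg : DifferentiableAt ℝ g p) :
    HasFDerivAt (fun x => g (x, p.2)) (fderiv ℝ g p ∘L .inl ℝ X F) p.1 :=
  hg.hasFDerivAt.comp p.1 (hasFDerivAt_prodMk_left p.1 p.2)

/-- The gradient of `f` in its first variable. -/
noncomputable def partialGradient (f : E × F → ℝ) (p : E × F) : E :=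
  (InnerProductSpace.toDual ℝ E).symm (fderiv ℝ f p ∘L .inl ℝ E F)

/-- The Hessian of `f` in its first variable, encoded as the operator representing the second
derivative through the inner product. -/
noncomputable def partialHessian (f : E × F → ℝ) (p : E × F) : E →L[ℝ] E :=
  fderiv ℝ (partialGradient f) p ∘L .inl ℝ E F

/-- The weighted mean of the partial Hessians of `f` along the segment from `p` to `p + (v, 0)`
that occurs in the integral form of the second-order Taylor remainder. -/
noncomputable def averagedHessian (f : E × F → ℝ) (p : E × F) (v : E) : E →L[ℝ] E :=
  ∫ s in (0 : ℝ)..1, (2 * (1 - s)) • partialHessian f (p + s • (v, 0))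

variable {f : E × F → ℝ}

lemma inner_partialGradient (f : E × F → ℝ) (p : E × F) (v : E) :
    ⟪partialGradient f p, v⟫_ℝ = fderiv ℝ f p (v, 0) :=
  InnerProductSpace.toDual_symm_apply

lemma fderiv_slice_apply (hf : Differentiable ℝ f) (x : E) (t : F) (v : E) :
    fderiv ℝ (fun x' => f (x', t)) x v = ⟪partialGradient f (x, t), v⟫_ℝ := by
  rw [(hasFDerivAt_slice (hf (x, t))).fderiv, inner_partialGradient]
  rfl

lemma contDiff_partialGradient (hf : ContDiff ℝ ∞ f) : ContDiff ℝ ∞ (partialGradient f) :=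
  (InnerProductSpace.toDual ℝ E).symm.contDiff.comp
    ((hf.fderiv_right le_rfl).clm_comp contDiff_const)

lemma contDiff_partialHessian (hf : ContDiff ℝ ∞ f) : ContDiff ℝ ∞ (partialHessian f) :=
  ((contDiff_partialGradient hf).fderiv_right le_rfl).clm_comp contDiff_const

lemma inner_partialHessian (hf : ContDiff ℝ ∞ f) (p : E × F) (u v : E) :
    ⟪partialHessian f p u, v⟫_ℝ = fderiv ℝ (fderiv ℝ f) p (u, 0) (v, 0) := by
  have hgrad : HasFDerivAt (partialGradient f) (fderiv ℝ (partialGradient f) p) p :=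
    ((contDiff_partialGradient hf).differentiable (by simp) p).hasFDerivAt
  have hf' : HasFDerivAt (fderiv ℝ f) (fderiv ℝ (fderiv ℝ f) p) p :=
    ((hf.fderiv_right (m := ∞) le_rfl).differentiable (by simp) p).hasFDerivAt
  have deriv_inner := hgrad.inner ℝ (hasFDerivAt_const v p)
  have deriv_eval := hf'.clm_apply (hasFDerivAt_const ((v, 0) : E × F) p)
  simp only [inner_partialGradient] at deriv_inner
  simpa [partialHessian] using congr($(deriv_inner.unique deriv_eval) (u, 0))

lemma isSelfAdjoint_partialHessian (hf : ContDiff ℝ ∞ f) (p : E × F) :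
    IsSelfAdjoint (partialHessian f p) := by
  rw [ContinuousLinearMap.isSelfAdjoint_iff_isSymmetric]
  intro u v
  have symm := ((contDiff_infty.1 hf 2).contDiffAt (x := p)).isSymmSndFDerivAt
    (by simp)
  calc ⟪partialHessian f p u, v⟫_ℝ = ⟪partialHessian f p v, u⟫_ℝ := by
        rw [inner_partialHessian hf, inner_partialHessian hf, symm]
    _ = ⟪u, partialHessian f p v⟫_ℝ := real_inner_comm _ _

lemma averagedHessian_zero (f : E × F → ℝ) (p : E × F) :
    averagedHessian f p 0 = partialHessian f p := by
  have weight : ∫ s in (0 : ℝ)..1, 2 * (1 - s) = 1 := by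
    rw [intervalIntegral.integral_const_mul,
      intervalIntegral.integral_comp_sub_left (fun s => s) (1 : ℝ)]
    norm_num [integral_id]
  have base (s : ℝ) : p + s • ((0 : E), (0 : F)) = p := by simp
  simp only [averagedHessian, base, intervalIntegral.integral_smul_const, weight, one_smul]

lemma contDiff_averagedHessian (hf : ContDiff ℝ ∞ f) :
    ContDiff ℝ ∞ fun q : (E × F) × E => averagedHessian f q.1 q.2 := by
  have hH := contDiff_partialHessian hf
  have integrand : ContDiff ℝ ∞ fun z : ((E × F) × E) × ℝ =>
      (2 * (1 - z.2)) • partialHessian f (z.1.1 + z.2 • (z.1.2, 0)) := by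
    fun_prop
  exact contDiff_intervalIntegral (n := ⊤) integrand 0 1

private lemma continuous_averagedHessian_integrand (hf : ContDiff ℝ ∞ f) (p : E × F) (v : E) :
    Continuous fun s : ℝ => (2 * (1 - s)) • partialHessian f (p + s • (v, 0)) := by
  have hH := (contDiff_partialHessian hf).continuous
  fun_prop

lemma isSelfAdjoint_averagedHessian (hf : ContDiff ℝ ∞ f) (p : E × F) (v : E) :
    IsSelfAdjoint (averagedHessian f p v) := by
  calc star (averagedHessian f p v)
      = ∫ s in (0 : ℝ)..1, star ((2 * (1 - s)) • partialHessian f (p + s • (v, 0))) :=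
        ((starL' ℝ : (E →L[ℝ] E) ≃L[ℝ] _).toContinuousLinearMap.intervalIntegral_comp_comm
          ((continuous_averagedHessian_integrand hf p v).intervalIntegrable 0 1)).symm
    _ = averagedHessian f p v := by
        simp only [star_smul, (isSelfAdjoint_partialHessian hf _).star_eq, star_trivial,
          averagedHessian]

lemma eq_add_inner_add_averagedHessian (hf : ContDiff ℝ ∞ f) (p : E × F) (v : E) :
    f (p + (v, 0)) = f p + ⟪partialGradient f p, v⟫_ℝ
      + 1 / 2 * ⟪averagedHessian f p v v, v⟫_ℝ := by
  have remainder : ⟪averagedHessian f p v v, v⟫_ℝ =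
      ∫ s in (0 : ℝ)..1, 2 * ((1 - s) * ⟪partialHessian f (p + s • (v, 0)) v, v⟫_ℝ) := by
    have h := continuous_averagedHessian_integrand hf p v
    rw [averagedHessian, ContinuousLinearMap.intervalIntegral_apply (h.intervalIntegrable 0 1),
      real_inner_comm, ← innerSL_apply_apply ℝ, ← (innerSL ℝ v).intervalIntegral_comp_comm
      ((h.clm_apply continuous_const).intervalIntegrable 0 1)]
    simp [real_inner_comm, mul_assoc]
  have taylor := map_add_eq_sum_add_integral_iteratedFDeriv (f := f) (x := p) (y := (v, 0))
    (n := 1) fun t _ => (contDiff_infty.1 hf 2).contDiffAt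
  rw [remainder, taylor, intervalIntegral.integral_const_mul]
  simp [Finset.sum_range_succ, iteratedFDeriv_two_apply, inner_partialHessian hf,
    inner_partialGradient]

end PartialDerivatives

lemma eventually_eq_of_hasFDerivAt_slice_zero {X F Y : Type*} [NormedAddCommGroup X]
    [NormedSpace ℝ X] [NormedAddCommGroup F] [NormedAddCommGroup Y] [NormedSpace ℝ Y]
    {g : X × F → Y} {p₀ : X × F}
    (hg : ∀ᶠ p in 𝓝 p₀, HasFDerivAt (fun x => g (x, p.2)) (0 : X →L[ℝ] Y) p.1) :
    ∀ᶠ p in 𝓝 p₀, g p = g (p₀.1, p.2) := by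
  obtain ⟨ε, hε, hball⟩ := Metric.eventually_nhds_iff_ball.1 hg
  filter_upwards [Metric.ball_mem_nhds p₀ hε] with p hp
  rw [← ball_prod_same] at hball hp
  have hderiv (x : X) (hx : x ∈ Metric.ball p₀.1 ε) : HasFDerivAt (g ⟨·, p.2⟩) (0 : X →L[ℝ] Y) x :=
    hball (x, p.2) ⟨hx, hp.2⟩
  exact Metric.isOpen_ball.is_const_of_fderiv_eq_zero
    (convex_ball p₀.1 ε).isPreconnected
    (fun x hx => (hderiv x hx).differentiableAt.differentiableWithinAt)
    (fun x hx => (hderiv x hx).fderiv) hp.1 (Metric.mem_ball_self hε)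

lemma apply_eq_zero_of_finrank_range_le {k V₁ V₂ V₃ : Type*} [Field k] [AddCommGroup V₁]
    [Module k V₁] [AddCommGroup V₂] [Module k V₂] [AddCommGroup V₃] [Module k V₃]
    [FiniteDimensional k V₁]
    {T : V₁ →ₗ[k] V₂} {S : V₂ →ₗ[k] V₃} (hsurj : Function.Surjective (S ∘ₗ T))
    (hrank : Module.finrank k T.range ≤ Module.finrank k V₃) {w : V₁} (hw : S (T w) = 0) :
    T w = 0 := by
  have hST : Function.Surjective (S.domRestrict T.range) := fun z =>
    (hsurj z).imp' T.rangeRestrict fun _ h => h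
  have : FiniteDimensional k V₃ := .of_surjective _ hST
  have hinj := (LinearMap.injective_iff_surjective_of_finrank_eq_finrank
    (hrank.antisymm (LinearMap.finrank_le_finrank_of_surjective hST))).2 hST
  exact congrArg Subtype.val (hinj (a₁ := T.rangeRestrict w) (a₂ := 0) (by simpa using hw))

section Compression

variable {E : Type*} [NormedAddCommGroup E] [InnerProductSpace ℝ E]

/-- The compression of an operator `T` to a subspace `U`, that is, the operator on `U` whose
quadratic form is the restriction of that of `T`. -/
noncomputable def compress (U : Submodule ℝ E) [U.HasOrthogonalProjection] (T : E →L[ℝ] E) :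
    U →L[ℝ] U :=
  U.orthogonalProjectionOnto ∘L T ∘L U.subtypeL

lemma inner_compress (U : Submodule ℝ E) [U.HasOrthogonalProjection] (T : E →L[ℝ] E) (y z : U) :
    ⟪compress U T y, z⟫_ℝ = ⟪T y, (z : E)⟫_ℝ :=
  U.inner_orthogonalProjectionOnto_eq_of_mem_right z (T y)

lemma contDiff_compress (U : Submodule ℝ E) [U.HasOrthogonalProjection] :
    ContDiff ℝ ∞ (compress U) :=
  contDiff_const.clm_comp (contDiff_id.clm_comp contDiff_const)

lemma isSelfAdjoint_compress [CompleteSpace E] (U : Submodule ℝ E) [CompleteSpace U]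
    {T : E →L[ℝ] E} (hT : IsSelfAdjoint T) : IsSelfAdjoint (compress U T) := by
  rw [ContinuousLinearMap.isSelfAdjoint_iff_isSymmetric] at hT ⊢
  intro y z
  calc ⟪compress U T y, z⟫_ℝ = ⟪T y, (z : E)⟫_ℝ := inner_compress U T y z
    _ = ⟪(y : E), T z⟫_ℝ := hT y z
    _ = ⟪y, compress U T z⟫_ℝ := by rw [real_inner_comm, ← inner_compress, real_inner_comm]

variable [FiniteDimensional ℝ E] {T : E →L[ℝ] E}

lemma isUnit_compress_range (hT : IsSelfAdjoint T) : IsUnit (compress T.range T) := by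
  have hinj : Function.Injective (compress T.range T) := by
    rw [injective_iff_map_eq_zero]
    intro y hy
    have hTy : T y = 0 := by
      simpa [compress] using (T.range.orthogonalProjectionOnto_mem_subspace_eq_self
        (⟨T y, LinearMap.mem_range_self _ _⟩ : T.range)).symm.trans hy
    have hy' : (y : E) ∈ T.rangeᗮ :=
      (ContinuousLinearMap.IsStarNormal.orthogonal_range hT.isStarNormal).ge hTy
    exact Subtype.ext (T.range.inf_orthogonal_eq_bot.le ⟨y.2, hy'⟩)
  have hsurj : Function.Surjective (compress T.range T) :=
    LinearMap.surjective_of_injective (f := (compress T.range T).toLinearMap) hinj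
  exact ContinuousLinearMap.isUnit_iff_bijective.2 ⟨hinj, hsurj⟩

lemma eventually_apply_eq_zero_of_finrank_range_le {U : Submodule ℝ E}
    (hU : IsUnit (compress U T)) :
    ∀ᶠ A in 𝓝 T, Module.finrank ℝ A.range ≤ Module.finrank ℝ U →
      ∀ w, U.orthogonalProjectionOnto (A w) = 0 → A w = 0 := by
  have hopen : ∀ᶠ A in 𝓝 T, IsUnit (compress U A) :=
    ((contDiff_compress U).continuous.tendsto T).eventually
      (Units.isOpen (R := U →L[ℝ] U) |>.mem_nhds hU)
  filter_upwards [hopen] with A hA hrank w hw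
  have hsurj : Function.Surjective
      ((U.orthogonalProjectionOnto : E →ₗ[ℝ] U) ∘ₗ (A : E →ₗ[ℝ] E)) := fun z =>
    ((ContinuousLinearMap.isUnit_iff_bijective.1 hA).2 z).imp' U.subtype fun _ h => h
  exact apply_eq_zero_of_finrank_range_le hsurj hrank hw

end Compression

section LyapunovSchmidt

variable {E F : Type*} [NormedAddCommGroup E] [InnerProductSpace ℝ E] {U : Submodule ℝ E}

/-- The map `(x, t) ↦ (x - u (x, t), t)`, which moves every point inside its fibre by the
offset `u`. -/
def fibreShift (u : E × F → U) (p : E × F) : E × F := (p.1 - u p, p.2)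

lemma fibreShift_zero {u : E × F → U} {t : F} (h : u (0, t) = 0) :
    fibreShift u (0, t) = (0, t) := by
  simp [fibreShift, h]

variable [NormedAddCommGroup F] {u : E × F → U}

lemma fibreShift_add (u : E × F → U) (p : E × F) : fibreShift u p + ((u p : E), 0) = p := by
  simp [fibreShift]

variable [NormedSpace ℝ F]

lemma contDiffAt_fibreShift {p : E × F} (hu : ContDiffAt ℝ ∞ u p) :
    ContDiffAt ℝ ∞ (fibreShift u) p :=
  (contDiffAt_fst.sub (U.subtypeL.contDiff.contDiffAt.comp p hu)).prodMk contDiffAt_snd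

lemma tendsto_fibreShift_zero (hu : ContDiffAt ℝ ∞ u 0) (hu₀ : u 0 = 0) :
    Tendsto (fibreShift u) (𝓝 0) (𝓝 0) :=
  ((contDiffAt_fibreShift hu).continuousAt.tendsto).trans_eq (by simp [fibreShift, hu₀])

lemma hasFDerivAt_fibreShift_slice {Y : Type*} [NormedAddCommGroup Y] [NormedSpace ℝ Y]
    {g : E × F → Y} (hg : Differentiable ℝ g) {p : E × F} (hu : DifferentiableAt ℝ u p) :
    HasFDerivAt (fun x => g (fibreShift u (x, p.2)))
      ((fderiv ℝ g (fibreShift u p) ∘L .inl ℝ E F) ∘L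
        (.id ℝ E - U.subtypeL ∘L fderiv ℝ u p ∘L .inl ℝ E F)) p.1 :=
  HasFDerivAt.comp (f := fun x => x - (u (x, p.2) : E)) p.1
    (hasFDerivAt_slice (hg (fibreShift u p)))
    ((hasFDerivAt_id p.1).sub (U.subtypeL.hasFDerivAt.comp p.1 (hasFDerivAt_slice hu)))

variable [FiniteDimensional ℝ E] {f : E × F → ℝ}

lemma exists_partialGradient_offset [CompleteSpace F] (hf : ContDiff ℝ ∞ f)
    (hgrad : ∀ᶠ t in 𝓝 (0 : F), partialGradient f (0, t) = 0)
    (hU : IsUnit (compress U (partialHessian f 0))) :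
    ∃ u : E × F → U, (∀ᶠ p in 𝓝 0, ContDiffAt ℝ ∞ u p) ∧ (∀ᶠ t in 𝓝 0, u (0, t) = 0) ∧
      ∀ᶠ p in 𝓝 0, U.orthogonalProjectionOnto (partialGradient f (fibreShift u p)) = 0 := by
  have hG := contDiff_partialGradient hf
  let Θ : (E × F) × U → U := fun q =>
    U.orthogonalProjectionOnto (partialGradient f (q.1.1 - q.2, q.1.2))
  have hΘ : ContDiff ℝ ∞ Θ := U.orthogonalProjectionOnto.contDiff.comp (hG.comp
    ((contDiff_fst.fst.sub (U.subtypeL.contDiff.comp contDiff_snd)).prodMk contDiff_fst.snd))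
  have hΘ₀ : Θ 0 = 0 := by
    simpa [Θ] using congrArg U.orthogonalProjectionOnto hgrad.self_of_nhds
  have hderiv : fderiv ℝ Θ 0 ∘L .inr ℝ (E × F) U = -compress U (partialHessian f 0) := by
    have slice := U.orthogonalProjectionOnto.hasFDerivAt.comp (0 : U)
      ((hG.differentiable (by simp) _).hasFDerivAt.comp (0 : U)
        (-(.inl ℝ E F ∘L U.subtypeL)).hasFDerivAt)
    have hslice : HasFDerivAt (fun s => Θ (0, s)) (-compress U (partialHessian f 0)) 0 :=
      (slice.congr_of_eventuallyEq (.of_forall fun s => by simp [Θ])).congr_fderiv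
        (by ext s; simp [compress, partialHessian, ← Prod.zero_eq_mk])
    exact HasFDerivAt.unique ((hΘ.differentiable (by simp) _).hasFDerivAt.comp 0
      (hasFDerivAt_prodMk_right (0 : E × F) (0 : U))) hslice
  obtain ⟨C, hC⟩ := hU.neg
  obtain ⟨u, hu₀, hu, huΘ⟩ := exists_implicit_contDiff (by simp) hΘ (z := 0)
    (hderiv ▸ ⟨ContinuousLinearEquiv.unitsEquiv ℝ U C, hC⟩)
  simp only [hΘ₀, Prod.fst_zero, Prod.snd_zero] at hu₀ hu huΘ
  have hcont : ContinuousAt u 0 := hu.self_of_nhds.continuousAt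
  refine ⟨u, hu, ?_, ?_⟩
  · have embed : Tendsto (fun t : F => (((0 : E), t), (0 : U))) (𝓝 0) (𝓝 0) :=
      Continuous.tendsto' (by fun_prop) _ _ rfl
    filter_upwards [embed.eventually huΘ, hgrad] with t ht hgt
    exact ht.1 (by simp [Θ, hgt])
  · have graph : Tendsto (fun p => (p, u p)) (𝓝 0) (𝓝 0) :=
      tendsto_id.prodMk_nhds (hu₀ ▸ hcont.tendsto)
    filter_upwards [graph.eventually huΘ] with p hp using hp.2 rfl

lemma eventually_partialGradient_fibreShift_eq_zero (hf : ContDiff ℝ ∞ f)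
    (hgrad : ∀ᶠ t in 𝓝 (0 : F), partialGradient f (0, t) = 0)
    (hU : IsUnit (compress U (partialHessian f 0)))
    (hrank : ∀ᶠ p in 𝓝 (0 : E × F),
      Module.finrank ℝ (partialHessian f p).range ≤ Module.finrank ℝ U)
    (hu : ∀ᶠ p in 𝓝 0, ContDiffAt ℝ ∞ u p) (hu₀ : ∀ᶠ t in 𝓝 0, u (0, t) = 0)
    (hproj : ∀ᶠ p in 𝓝 0,
      U.orthogonalProjectionOnto (partialGradient f (fibreShift u p)) = 0) :
    ∀ᶠ p in 𝓝 (0 : E × F), partialGradient f (fibreShift u p) = 0 := by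
  have hshift : Tendsto (fibreShift u) (𝓝 0) (𝓝 0) :=
    tendsto_fibreShift_zero hu.self_of_nhds hu₀.self_of_nhds
  have hHess : Tendsto (partialHessian f) (𝓝 0) (𝓝 (partialHessian f 0)) :=
    (contDiff_partialHessian hf).continuous.tendsto 0
  have hstationary : ∀ᶠ p in 𝓝 (0 : E × F),
      HasFDerivAt (fun x => partialGradient f (fibreShift u (x, p.2))) (0 : E →L[ℝ] E) p.1 := by
    filter_upwards [hshift.eventually (hrank.and
      (hHess.eventually (eventually_apply_eq_zero_of_finrank_range_le hU))), hu,
      hproj.eventually_nhds] with p ⟨hrank_p, hkernel⟩ hup hproj_p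
    have hderiv := hasFDerivAt_fibreShift_slice
      ((contDiff_partialGradient hf).differentiable (by simp)) (hup.differentiableAt (by simp))
    have hconst : (fun x => U.orthogonalProjectionOnto (partialGradient f (fibreShift u (x, p.2))))
        =ᶠ[𝓝 p.1] fun _ => 0 :=
      ((Continuous.prodMk_left p.2).tendsto p.1).eventually hproj_p
    have hzero := (U.orthogonalProjectionOnto.hasFDerivAt.comp p.1 hderiv).unique
      ((hasFDerivAt_const 0 p.1).congr_of_eventuallyEq hconst)
    refine hderiv.congr_fderiv ?_
    ext1 w
    exact hkernel hrank_p _ congr($hzero w)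
  filter_upwards [eventually_eq_of_hasFDerivAt_slice_zero
      (g := fun p => partialGradient f (fibreShift u p)) hstationary,
    continuousAt_snd.tendsto.eventually (hgrad.and hu₀)] with p hp ⟨hgrad_p, hu₀p⟩
  rw [hp]
  simpa [fibreShift_zero hu₀p] using hgrad_p

lemma eventually_apply_fibreShift_eq_zero (hf : ContDiff ℝ ∞ f)
    (hf₀ : ∀ᶠ t in 𝓝 (0 : F), f (0, t) = 0)
    (hu : ∀ᶠ p in 𝓝 0, ContDiffAt ℝ ∞ u p) (hu₀ : ∀ᶠ t in 𝓝 0, u (0, t) = 0)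
    (hcrit : ∀ᶠ p in 𝓝 0, partialGradient f (fibreShift u p) = 0) :
    ∀ᶠ p in 𝓝 0, f (fibreShift u p) = 0 := by
  have hstationary : ∀ᶠ p in 𝓝 (0 : E × F),
      HasFDerivAt (fun x => f (fibreShift u (x, p.2))) (0 : E →L[ℝ] ℝ) p.1 := by
    filter_upwards [hu, hcrit] with p hup hp
    have hfibre : fderiv ℝ f (fibreShift u p) ∘L .inl ℝ E F = 0 := by
      simpa [partialGradient] using hp
    exact (hasFDerivAt_fibreShift_slice (hf.differentiable (by simp))
      (hup.differentiableAt (by simp))).congr_fderiv (by simp [hfibre])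
  filter_upwards [eventually_eq_of_hasFDerivAt_slice_zero
      (g := fun p => f (fibreShift u p)) hstationary,
    continuousAt_snd.tendsto.eventually (hf₀.and hu₀)] with p hp ⟨hf₀p, hu₀p⟩
  rw [hp]
  simpa [fibreShift_zero hu₀p] using hf₀p

lemma fderiv_offset_comp_inl (hf : ContDiff ℝ ∞ f) (hker : (partialHessian f 0).ker ≤ Uᗮ)
    (hu : ContDiffAt ℝ ∞ u 0) (hu₀ : u 0 = 0)
    (hcrit : ∀ᶠ p in 𝓝 0, partialGradient f (fibreShift u p) = 0) :
    fderiv ℝ u 0 ∘L .inl ℝ E F = U.orthogonalProjectionOnto := by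
  have hderiv := hasFDerivAt_fibreShift_slice
    ((contDiff_partialGradient hf).differentiable (by simp)) (hu.differentiableAt (by simp))
  have hconst : (fun x => partialGradient f (fibreShift u (x, 0))) =ᶠ[𝓝 (0 : E)] fun _ => 0 :=
    ((Continuous.prodMk_left (0 : F)).tendsto (0 : E)).eventually hcrit
  have hzero := hderiv.unique ((hasFDerivAt_const 0 (0 : E)).congr_of_eventuallyEq hconst)
  ext1 w
  have hw : w - (fderiv ℝ u 0 (w, 0) : E) ∈ Uᗮ := by
    refine hker ?_
    have h := congr($hzero w)
    rw [show fibreShift u 0 = 0 from fibreShift_zero hu₀] at h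
    exact h
  rw [← Submodule.orthogonalProjectionOnto_eq_zero_iff] at hw
  simpa [sub_eq_zero] using congrArg Neg.neg hw

end LyapunovSchmidt

section MorseChart

lemma fderiv_clm_apply_of_eq_one {X Y : Type*} [NormedAddCommGroup X] [NormedSpace ℝ X]
    [NormedAddCommGroup Y] [NormedSpace ℝ Y] {L : X → Y →L[ℝ] Y} {u : X → Y} {p : X}
    (hL : DifferentiableAt ℝ L p) (hu : DifferentiableAt ℝ u p) (hL₁ : L p = 1) (hu₀ : u p = 0) :
    fderiv ℝ (fun p => L p (u p)) p = fderiv ℝ u p := by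
  rw [fderiv_clm_apply hL hu]
  ext w
  simp [hL₁, hu₀]

variable {E F : Type*} [NormedAddCommGroup E] [InnerProductSpace ℝ E] [FiniteDimensional ℝ E]
  {U : Submodule ℝ E}

/-- The map `(x, t) ↦ y (x, t) + (x - P x)`, where `P` is the orthogonal projection onto `U`: it
completes coordinates `y` along `U` by the coordinates along `Uᗮ`. -/
noncomputable def completeChart (y : E × F → U) (p : E × F) : E :=
  y p + (p.1 - U.starProjection p.1)

lemma inner_apply_completeChart {T : E →L[ℝ] E} (hT : IsSelfAdjoint T) (y : E × F → T.range)
    (p : E × F) : ⟪T (completeChart y p), completeChart y p⟫_ℝ = ⟪T (y p), (y p : E)⟫_ℝ := by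
  have hperp : p.1 - T.range.starProjection p.1 ∈ T.rangeᗮ :=
    T.range.sub_starProjection_mem_orthogonal p.1
  have hker : T (p.1 - T.range.starProjection p.1) = 0 :=
    (ContinuousLinearMap.IsStarNormal.orthogonal_range hT.isStarNormal).le hperp
  have horth : ⟪T (y p), p.1 - T.range.starProjection p.1⟫_ℝ = 0 :=
    hperp _ (LinearMap.mem_range_self _ _)
  rw [completeChart, map_add, hker, add_zero, inner_add_right, horth, add_zero]

variable [NormedAddCommGroup F] [NormedSpace ℝ F] {f : E × F → ℝ} {u : E × F → U}

lemma contDiffAt_completeChart {y : E × F → U} {p : E × F} (hy : ContDiffAt ℝ ∞ y p) :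
    ContDiffAt ℝ ∞ (completeChart y) p :=
  (U.subtypeL.contDiff.contDiffAt.comp p hy).add
    (contDiffAt_fst.sub (U.starProjection.contDiff.contDiffAt.comp p contDiffAt_fst))

lemma fderiv_completeChart_comp_inl {y : E × F → U} {p : E × F} (hy : DifferentiableAt ℝ y p)
    (hy' : fderiv ℝ y p ∘L .inl ℝ E F = U.orthogonalProjectionOnto) :
    fderiv ℝ (completeChart y) p ∘L .inl ℝ E F = 1 := by
  have hderiv : HasFDerivAt (completeChart y) _ p :=
    (U.subtypeL.hasFDerivAt.comp p hy.hasFDerivAt).add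
      (hasFDerivAt_fst.sub (U.starProjection.hasFDerivAt.comp p hasFDerivAt_fst))
  rw [hderiv.fderiv]
  ext w
  have hw : (fderiv ℝ y p (w, 0) : E) = U.starProjection w := congr(($hy' w : E))
  simp [hw]

/-- The operator whose quadratic form at `u p` is twice `f p` if `f` and its partial gradient vanish
at `fibreShift u p`: the averaged Hessian from `fibreShift u p` to `p`, compressed to `U`. -/
noncomputable def fibreHessian (f : E × F → ℝ) (u : E × F → U) (p : E × F) : U →L[ℝ] U :=
  compress U (averagedHessian f (fibreShift u p) (u p))

lemma contDiffAt_fibreHessian (hf : ContDiff ℝ ∞ f) {p : E × F} (hu : ContDiffAt ℝ ∞ u p) :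
    ContDiffAt ℝ ∞ (fibreHessian f u) p := by
  have hsegment : ContDiffAt ℝ ∞ (fun p => (fibreShift u p, (u p : E))) p :=
    (contDiffAt_fibreShift hu).prodMk (U.subtypeL.contDiff.contDiffAt.comp p hu)
  have haveraged := (contDiff_averagedHessian hf).contDiffAt.comp p hsegment
  exact (contDiff_compress U).contDiffAt.comp p haveraged

lemma fibreHessian_zero (hu₀ : u 0 = 0) :
    fibreHessian f u 0 = compress U (partialHessian f 0) := by
  have hshift : fibreShift u 0 = 0 := fibreShift_zero hu₀
  simp [fibreHessian, hshift, hu₀, averagedHessian_zero]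

lemma eq_inner_fibreHessian (hf : ContDiff ℝ ∞ f) {p : E × F}
    (hcrit : partialGradient f (fibreShift u p) = 0) (hval : f (fibreShift u p) = 0) :
    f p = 1 / 2 * ⟪fibreHessian f u p (u p), u p⟫_ℝ := by
  have taylor := eq_add_inner_add_averagedHessian hf (fibreShift u p) (u p : E)
  rw [fibreShift_add, hcrit, hval, inner_zero_left, zero_add, zero_add] at taylor
  rw [taylor, fibreHessian, inner_compress]

lemma exists_morse_coordinates [CompleteSpace F] (hf : ContDiff ℝ ∞ f)
    (hf₀ : ∀ᶠ t in 𝓝 (0 : F), f (0, t) = 0)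
    (hgrad : ∀ᶠ t in 𝓝 (0 : F), partialGradient f (0, t) = 0)
    (hrank : ∀ᶠ p in 𝓝 (0 : E × F), Module.finrank ℝ (partialHessian f p).range ≤
      Module.finrank ℝ (partialHessian f 0).range) :
    ∃ y : E × F → (partialHessian f 0).range, (∀ᶠ p in 𝓝 0, ContDiffAt ℝ ∞ y p) ∧
      (∀ᶠ t in 𝓝 0, y (0, t) = 0) ∧
      fderiv ℝ y 0 ∘L .inl ℝ E F = (partialHessian f 0).range.orthogonalProjectionOnto ∧
      ∀ᶠ p in 𝓝 0, f p = 1 / 2 * ⟪partialHessian f 0 (y p), (y p : E)⟫_ℝ := by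
  set H := partialHessian f 0
  have hH : IsSelfAdjoint H := isSelfAdjoint_partialHessian hf 0
  have hunit : IsUnit (compress H.range H) := isUnit_compress_range hH
  obtain ⟨u, hu, hu₀, hproj⟩ := exists_partialGradient_offset hf hgrad hunit
  have hcrit := eventually_partialGradient_fibreShift_eq_zero hf hgrad hunit hrank hu hu₀ hproj
  have hval := eventually_apply_fibreShift_eq_zero hf hf₀ hu hu₀ hcrit
  have hu00 : u 0 = 0 := hu₀.self_of_nhds
  have hu' : fderiv ℝ u 0 ∘L .inl ℝ E F = H.range.orthogonalProjectionOnto :=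
    fderiv_offset_comp_inl hf
      (ContinuousLinearMap.IsStarNormal.orthogonal_range hH.isStarNormal).ge
      hu.self_of_nhds hu00 hcrit
  obtain ⟨β, hβ₁, hβ, hcongr⟩ :=
    exists_contDiffAt_inner_apply_eq (isSelfAdjoint_compress H.range hH) hunit
  have hA : ∀ᶠ p in 𝓝 0, ContDiffAt ℝ ∞ (fibreHessian f u) p :=
    hu.mono fun p => contDiffAt_fibreHessian hf
  have hA₀ : fibreHessian f u 0 = compress H.range H := fibreHessian_zero hu00
  have hAlim : Tendsto (fibreHessian f u) (𝓝 0) (𝓝 (compress H.range H)) :=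
    hA₀ ▸ hA.self_of_nhds.continuousAt.tendsto
  have hβA : ∀ᶠ p in 𝓝 0, ContDiffAt ℝ ∞ (fun p => β (fibreHessian f u p)) p := by
    filter_upwards [hAlim.eventually hβ, hA] with p hβp hAp using hβp.comp p hAp
  refine ⟨fun p => β (fibreHessian f u p) (u p), ?_, ?_, ?_, ?_⟩
  · filter_upwards [hβA, hu] with p hβp hup using hβp.clm_apply hup
  · filter_upwards [hu₀] with t ht using by simp [ht]
  · rw [fderiv_clm_apply_of_eq_one (hβA.self_of_nhds.differentiableAt (by simp))
      (hu.self_of_nhds.differentiableAt (by simp)) (by rw [hA₀, hβ₁]) hu00, hu']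
  · filter_upwards [hAlim.eventually hcongr, hcrit, hval] with p hp hcrit_p hval_p
    have hsa : IsSelfAdjoint (fibreHessian f u p) :=
      isSelfAdjoint_compress _ (isSelfAdjoint_averagedHessian hf _ _)
    rw [eq_inner_fibreHessian hf hcrit_p hval_p, ← hp hsa, inner_compress]

lemma exists_morse_chart [CompleteSpace F] (hf : ContDiff ℝ ∞ f)
    (hf₀ : ∀ᶠ t in 𝓝 (0 : F), f (0, t) = 0)
    (hgrad : ∀ᶠ t in 𝓝 (0 : F), partialGradient f (0, t) = 0)
    (hrank : ∀ᶠ p in 𝓝 (0 : E × F), Module.finrank ℝ (partialHessian f p).range ≤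
      Module.finrank ℝ (partialHessian f 0).range) :
    ∃ τ : E × F → E, (∀ᶠ p in 𝓝 0, ContDiffAt ℝ ∞ τ p) ∧ (∀ᶠ t in 𝓝 0, τ (0, t) = 0) ∧
      (∀ᶠ p in 𝓝 0, IsUnit (fderiv ℝ τ p ∘L .inl ℝ E F)) ∧
      ∀ᶠ p in 𝓝 0, f p = 1 / 2 * ⟪partialHessian f 0 (τ p), τ p⟫_ℝ := by
  obtain ⟨y, hy, hy₀, hy', hfy⟩ := exists_morse_coordinates hf hf₀ hgrad hrank
  have hτ : ∀ᶠ p in 𝓝 0, ContDiffAt ℝ ∞ (completeChart y) p :=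
    hy.mono fun p => contDiffAt_completeChart
  have hτ' : fderiv ℝ (completeChart y) 0 ∘L .inl ℝ E F = 1 :=
    fderiv_completeChart_comp_inl (hy.self_of_nhds.differentiableAt (by simp)) hy'
  have hcont : ContinuousAt (fun p => fderiv ℝ (completeChart y) p ∘L .inl ℝ E F) 0 :=
    (hτ.self_of_nhds.continuousAt_fderiv (by simp)).clm_comp continuousAt_const
  refine ⟨completeChart y, hτ, ?_, ?_, ?_⟩
  · filter_upwards [hy₀] with t ht using by simp [completeChart, ht]
  · exact hcont.tendsto.eventually (Units.isOpen.mem_nhds (hτ' ▸ isUnit_one))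
  · filter_upwards [hfy] with p hp
    rw [hp, inner_apply_completeChart (isSelfAdjoint_partialHessian hf 0)]

end MorseChart

section QuadraticForms

lemma weightedSumSquares_comp_equiv_equivalent {ι κ : Type*} [Fintype ι] [Fintype κ]
    (w : κ → ℝ) (e : ι ≃ κ) : (QuadraticMap.weightedSumSquares ℝ (w ∘ e)).Equivalent
      (QuadraticMap.weightedSumSquares ℝ w) := by
  refine ⟨{ LinearEquiv.funCongrLeft ℝ ℝ e.symm with map_app' := fun v => ?_ }⟩
  simp [QuadraticMap.weightedSumSquares_apply, ← Equiv.sum_comp e, LinearMap.funLeft_apply]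

variable {ι : Type*}

lemma ncard_pos_add_ncard_neg_add_ncard_zero [Fintype ι] (w : ι → ℝ) :
    {i | 0 < w i}.ncard + {i | w i < 0}.ncard + {i | w i = 0}.ncard = Fintype.card ι := by
  have h := QuadraticForm.sigPos_add_sigNeg_add_radical
    (Q := QuadraticMap.weightedSumSquares ℝ w)
  rwa [QuadraticForm.sigPos_weightedSumSquares, QuadraticForm.sigNeg_weightedSumSquares,
    QuadraticForm.radical_weightedSumSquares, Pi.dim_spanSubset, Module.finrank_fintype_fun_eq_card]
    at h

lemma exists_perm_sign_eq [Finite ι] {w w' : ι → ℝ}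
    (hpos : {i | 0 < w i}.ncard = {i | 0 < w' i}.ncard)
    (hneg : {i | w i < 0}.ncard = {i | w' i < 0}.ncard) :
    ∃ e : Equiv.Perm ι, ∀ i, SignType.sign (w' (e i)) = SignType.sign (w i) := by
  have hzero : {i | w i = 0}.ncard = {i | w' i = 0}.ncard := by
    have := Fintype.ofFinite ι
    have h := ncard_pos_add_ncard_neg_add_ncard_zero w
    have h' := ncard_pos_add_ncard_neg_add_ncard_zero w'
    omega
  have hfibre (s : SignType) :
      {i | SignType.sign (w i) = s}.ncard = {i | SignType.sign (w' i) = s}.ncard := by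
    cases s
    · simpa only [SignType.zero_eq_zero, _root_.sign_eq_zero_iff] using hzero
    · simpa only [SignType.neg_eq_neg_one, sign_eq_neg_one_iff] using hneg
    · simpa only [SignType.pos_eq_one, sign_eq_one_iff] using hpos
  let fibreEquiv (s : SignType) := (Finite.card_eq.1 (hfibre s)).some
  exact ⟨.ofFiberEquiv fibreEquiv, Equiv.ofFiberEquiv_map fibreEquiv⟩

variable [Fintype ι]

lemma weightedSumSquares_equivalent_of_ncard_eq {w w' : ι → ℝ}
    (hpos : {i | 0 < w i}.ncard = {i | 0 < w' i}.ncard)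
    (hneg : {i | w i < 0}.ncard = {i | w' i < 0}.ncard) :
    (QuadraticMap.weightedSumSquares ℝ w).Equivalent (QuadraticMap.weightedSumSquares ℝ w') := by
  obtain ⟨e, he⟩ := exists_perm_sign_eq hpos hneg
  have hsign := QuadraticForm.isometryEquivSignWeightedSumSquares w
  simp only [← he] at hsign
  exact .trans ⟨hsign⟩ ((weightedSumSquares_comp_equiv_equivalent
    (fun i => (SignType.sign (w' i) : ℝ)) e).trans
      ⟨(QuadraticForm.isometryEquivSignWeightedSumSquares w').symm⟩)

variable [DecidableEq ι]

lemma inner_toEuclideanCLM_apply_self {M : Matrix ι ι ℝ} (hM : M.IsHermitian)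
    (y : EuclideanSpace ℝ ι) : ⟪Matrix.toEuclideanCLM (𝕜 := ℝ) M y, y⟫_ℝ =
      QuadraticMap.weightedSumSquares ℝ hM.eigenvalues (hM.eigenvectorBasis.repr y) := by
  have heigen (i : ι) : Matrix.toEuclideanCLM (𝕜 := ℝ) M (hM.eigenvectorBasis i) =
      hM.eigenvalues i • hM.eigenvectorBasis i := by
    ext j
    exact congrFun (hM.mulVec_eigenvectorBasis i) j
  nth_rewrite 1 [← hM.eigenvectorBasis.sum_repr y]
  rw [map_sum, sum_inner, QuadraticMap.weightedSumSquares_apply]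
  refine Finset.sum_congr rfl fun i _ => ?_
  rw [map_smul, heigen, real_inner_smul_left, real_inner_smul_left,
    ← hM.eigenvectorBasis.repr_apply_apply, smul_eq_mul, mul_left_comm]

lemma ncard_eigenvalues_pos {M : Matrix ι ι ℝ} (hM : M.IsHermitian) :
    {i | 0 < hM.eigenvalues i}.ncard = Fintype.card {i // 0 < hM.eigenvalues i} :=
  Nat.card_eq_fintype_card

lemma ncard_eigenvalues_neg {M : Matrix ι ι ℝ} (hM : M.IsHermitian) :
    {i | hM.eigenvalues i < 0}.ncard = M.rank - Fintype.card {i // 0 < hM.eigenvalues i} := by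
  have h := ncard_pos_add_ncard_neg_add_ncard_zero hM.eigenvalues
  have hrank : M.rank + {i | hM.eigenvalues i = 0}.ncard = Fintype.card ι := by
    rw [hM.rank_eq_card_non_zero_eigs, ← Nat.card_eq_fintype_card, ← Nat.card_eq_fintype_card,
      ← Set.ncard_add_ncard_compl {i | hM.eigenvalues i = 0}, add_comm]
    rfl
  rw [← ncard_eigenvalues_pos]
  omega

/-- The weights of the quadratic form `Q_{m,n}`: `1` up to the index `m`, then `-1` up to `n`,
then `0`. -/
def morseWeight (d m n : ℕ) (j : Fin d) : ℝ :=
  if (j : ℕ) < m then 1 else if (j : ℕ) < n then -1 else 0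

lemma Qmn_eq_weightedSumSquares (d m n : ℕ) (y : EuclideanSpace ℝ (Fin d)) :
    Qmn d m n y = QuadraticMap.weightedSumSquares ℝ (morseWeight d m n) y := by
  simp only [Qmn, QuadraticMap.weightedSumSquares_apply, morseWeight, smul_eq_mul, ite_mul,
    one_mul, neg_mul, zero_mul, sq]

lemma ncard_fin_preimage_Ico {d n : ℕ} (m : ℕ) (hn : n ≤ d) :
    (Fin.val ⁻¹' Ico m n : Set (Fin d)).ncard = n - m := by
  rw [Set.ncard_preimage_of_injective_subset_range Fin.val_injective, Set.ncard_Ico_nat]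
  exact fun k hk => ⟨⟨k, hk.2.trans_le hn⟩, rfl⟩

lemma ncard_morseWeight_pos {d m : ℕ} (n : ℕ) (hm : m ≤ d) :
    {j | 0 < morseWeight d m n j}.ncard = m := by
  have h : {j | 0 < morseWeight d m n j} = Fin.val ⁻¹' Ico 0 m := by
    ext j
    simp only [morseWeight, mem_ofPred_eq, mem_preimage, mem_Ico]
    split_ifs <;> simp [*]
  rw [h, ncard_fin_preimage_Ico 0 hm, tsub_zero]

lemma ncard_morseWeight_neg {d n : ℕ} (m : ℕ) (hn : n ≤ d) :
    {j | morseWeight d m n j < 0}.ncard = n - m := by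
  have h : {j | morseWeight d m n j < 0} = Fin.val ⁻¹' Ico m n := by
    ext j
    simp only [morseWeight, mem_ofPred_eq, mem_preimage, mem_Ico]
    split_ifs <;> simp_all [zero_le_one.not_gt]
  rw [h, ncard_fin_preimage_Ico m hn]

lemma exists_Qmn_eq_inner_toEuclideanCLM {d : ℕ} {M : Matrix (Fin d) (Fin d) ℝ}
    (hM : M.IsHermitian) :
    ∃ S : EuclideanSpace ℝ (Fin d) ≃L[ℝ] EuclideanSpace ℝ (Fin d), ∀ y,
      Qmn d (Fintype.card {i // 0 < hM.eigenvalues i}) M.rank (S y) =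
        1 / 2 * ⟪Matrix.toEuclideanCLM (𝕜 := ℝ) M y, y⟫_ℝ := by
  have hhalf (i : Fin d) : 0 < 1 / 2 * hM.eigenvalues i ↔ 0 < hM.eigenvalues i :=
    mul_pos_iff_of_pos_left one_half_pos
  have hhalf' (i : Fin d) : 1 / 2 * hM.eigenvalues i < 0 ↔ hM.eigenvalues i < 0 := by
    constructor <;> intro h <;> linarith
  have hcard : Fintype.card {i // 0 < hM.eigenvalues i} ≤ d :=
    (Fintype.card_subtype_le _).trans_eq (Fintype.card_fin d)
  have hrank : M.rank ≤ d := M.rank_le_width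
  obtain ⟨e⟩ := weightedSumSquares_equivalent_of_ncard_eq
    (w := fun i => 1 / 2 * hM.eigenvalues i)
    (w' := morseWeight d (Fintype.card {i // 0 < hM.eigenvalues i}) M.rank)
    (by rw [ncard_morseWeight_pos _ hcard, ← ncard_eigenvalues_pos]; simp only [hhalf])
    (by simp only [hhalf', ncard_morseWeight_neg _ hrank, ncard_eigenvalues_neg])
  let coordinates := EuclideanSpace.equiv (Fin d) ℝ
  refine ⟨hM.eigenvectorBasis.repr.toContinuousLinearEquiv.trans <| coordinates.trans <|
    e.toLinearEquiv.toContinuousLinearEquiv.trans coordinates.symm, fun y => ?_⟩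
  rw [Qmn_eq_weightedSumSquares, inner_toEuclideanCLM_apply_self hM]
  refine (e.map_app _).trans ?_
  simp [QuadraticMap.weightedSumSquares_apply, Finset.mul_sum, mul_assoc, coordinates]

end QuadraticForms


section HessianMatrix

variable {ι : Type*} [Fintype ι] [DecidableEq ι]

/-- The Hessian matrix `∂ᵢ∂ⱼ g (x)` of a function on a Euclidean space. -/
noncomputable def hessianMatrix (g : EuclideanSpace ℝ ι → ℝ) (x : EuclideanSpace ℝ ι) :
    Matrix ι ι ℝ :=
  Matrix.of fun i j =>
    fderiv ℝ (fun x' => fderiv ℝ g x' (EuclideanSpace.single j 1)) x (EuclideanSpace.single i 1)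

lemma toEuclideanCLM_of_apply_single (T : EuclideanSpace ℝ ι →L[ℝ] EuclideanSpace ℝ ι) :
    Matrix.toEuclideanCLM (𝕜 := ℝ) (Matrix.of fun i j => T (EuclideanSpace.single j 1) i) = T := by
  refine ContinuousLinearMap.coe_injective <|
    (EuclideanSpace.basisFun ι ℝ).toBasis.ext fun j => ?_
  ext i
  simp

lemma det_of_apply_single_ne_zero {T : EuclideanSpace ℝ ι →L[ℝ] EuclideanSpace ℝ ι}
    (hT : IsUnit T) : (Matrix.of fun i j => T (EuclideanSpace.single j 1) i).det ≠ 0 := by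
  rw [← toEuclideanCLM_of_apply_single T, isUnit_map_iff, Matrix.isUnit_iff_isUnit_det] at hT
  exact hT.ne_zero

lemma finrank_range_toEuclideanCLM (M : Matrix ι ι ℝ) :
    Module.finrank ℝ (Matrix.toEuclideanCLM (𝕜 := ℝ) M).range = M.rank := by
  rw [Matrix.rank_eq_finrank_range_toLin M (EuclideanSpace.basisFun ι ℝ).toBasis
    (EuclideanSpace.basisFun ι ℝ).toBasis]
  rfl

variable {F : Type*} [NormedAddCommGroup F] [NormedSpace ℝ F] {f : EuclideanSpace ℝ ι × F → ℝ}

lemma toEuclideanCLM_hessianMatrix (hf : ContDiff ℝ ∞ f) (p : EuclideanSpace ℝ ι × F) :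
    Matrix.toEuclideanCLM (𝕜 := ℝ) (hessianMatrix (fun x => f (x, p.2)) p.1) =
      partialHessian f p := by
  have hentry (i j : ι) : hessianMatrix (fun x => f (x, p.2)) p.1 i j =
      partialHessian f p (EuclideanSpace.single j 1) i := by
    have hderiv : HasFDerivAt (fun x => partialGradient f (x, p.2)) (partialHessian f p) p.1 :=
      hasFDerivAt_slice ((contDiff_partialGradient hf).differentiable (by simp) p)
    have hself := (isSelfAdjoint_partialHessian hf p).isSymmetric
      (EuclideanSpace.single i 1) (EuclideanSpace.single j 1)
    simp only [hessianMatrix, Matrix.of_apply, fderiv_slice_apply (hf.differentiable (by simp))]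
    rw [(hderiv.inner ℝ (hasFDerivAt_const _ _)).fderiv]
    simpa [EuclideanSpace.inner_single_left] using hself
  rw [← toEuclideanCLM_of_apply_single (partialHessian f p)]
  exact congrArg _ (Matrix.ext hentry)

end HessianMatrix

theorem statement15_general {d n : ℕ} {F : Type*} [NormedAddCommGroup F] [NormedSpace ℝ F]
    [CompleteSpace F] {f : EuclideanSpace ℝ (Fin d) × F → ℝ} (hf : ContDiff ℝ ∞ f)
    (hf₀ : ∀ᶠ t in 𝓝 (0 : F), f (0, t) = 0)
    (hgrad : ∀ᶠ t in 𝓝 (0 : F), fderiv ℝ (fun x => f (x, t)) 0 = 0)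
    (hrank : ∀ᶠ p in 𝓝 (0 : EuclideanSpace ℝ (Fin d) × F),
      (hessianMatrix (fun x => f (x, p.2)) p.1).rank = n)
    (hsymm : (hessianMatrix (fun x => f (x, 0)) 0).IsHermitian)
    {m : ℕ} (hm : m = Fintype.card {i // 0 < hsymm.eigenvalues i}) :
    ∃ (V : Set (EuclideanSpace ℝ (Fin d))) (W : Set F), IsOpen V ∧ IsOpen W ∧ 0 ∈ V ∧ 0 ∈ W ∧
      ∃ τ : EuclideanSpace ℝ (Fin d) × F → EuclideanSpace ℝ (Fin d),
        ContDiffOn ℝ ∞ τ (V ×ˢ W) ∧ (∀ t ∈ W, τ (0, t) = 0) ∧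
        (∀ x ∈ V, ∀ t ∈ W, (Matrix.of fun i j : Fin d =>
          fderiv ℝ (fun x' => τ (x', t)) x (EuclideanSpace.single j 1) i).det ≠ 0) ∧
        ∀ x ∈ V, ∀ t ∈ W, f (x, t) = Qmn d m n (τ (x, t)) := by
  have hrank₀ : (hessianMatrix (fun x => f (x, 0)) 0).rank = n := hrank.self_of_nhds
  obtain ⟨σ, hσ, hσ₀, hσ', hfσ⟩ := exists_morse_chart hf hf₀
    (hgrad.mono fun t ht => by
      refine ext_inner_right ℝ fun v => ?_
      rw [← fderiv_slice_apply (hf.differentiable (by simp)), ht, zero_apply, inner_zero_left])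
    (hrank.mono fun p hp => by
      rw [← toEuclideanCLM_hessianMatrix hf, ← toEuclideanCLM_hessianMatrix hf,
        finrank_range_toEuclideanCLM, finrank_range_toEuclideanCLM, hp]
      exact hrank₀.ge)
  obtain ⟨S, hS⟩ := exists_Qmn_eq_inner_toEuclideanCLM hsymm
  rw [← hm, hrank₀, toEuclideanCLM_hessianMatrix hf (0, 0)] at hS
  have hσ₀' : ∀ᶠ p in 𝓝 (0 : EuclideanSpace ℝ (Fin d) × F), σ (0, p.2) = 0 :=
    (continuous_snd.tendsto (0 : EuclideanSpace ℝ (Fin d) × F)).eventually hσ₀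
  obtain ⟨V, W, hV, hV₀, hW, hW₀, hVW⟩ := mem_nhds_prod_iff'.1 <|
    hσ.and <| hσ₀'.and <| hσ'.and hfσ
  replace hVW (x) (hx : x ∈ V) (t) (ht : t ∈ W) := hVW (mk_mem_prod hx ht)
  refine ⟨V, W, hV, hW, hV₀, hW₀, S ∘ σ, fun p hp => ?_, fun t ht => ?_, fun x hx t ht => ?_,
    fun x hx t ht => ?_⟩
  · exact (S.contDiff.contDiffAt.comp p (hVW _ hp.1 _ hp.2).1).contDiffWithinAt
  · simp [(hVW 0 hV₀ t ht).2.1]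
  · obtain ⟨hσp, -, hunit, -⟩ := hVW x hx t ht
    have hτ := S.hasFDerivAt.comp x
      (hasFDerivAt_slice (p := (x, t)) (hσp.differentiableAt (by simp)))
    have hS_unit : IsUnit (S : EuclideanSpace ℝ (Fin d) →L[ℝ] EuclideanSpace ℝ (Fin d)) :=
      ContinuousLinearMap.isUnit_iff_bijective.2 S.bijective
    exact hτ.fderiv ▸ det_of_apply_single_ne_zero (hS_unit.mul hunit)
  · exact (hVW x hx t ht).2.2.2.trans (hS _).symm

end

/-- Morse's lemma with parameters and constant rank: if `f(0,t) = 0`, `∇ₓf(0,t) = 0` for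
`t` near `0` and the Hessian `Δₓf(x,t)` has rank exactly `n` near `(0,0)`, with `m`
positive eigenvalues at `(0,0)`, then near `0` there is a smooth change of variables `τ`
with `τ(0,t) = 0`, `det Jₓτ ≠ 0`, and `f(x,t) = Q_{m,n}(τ(x,t))`. -/
theorem statement15 (d n : ℕ) (hnd : n ≤ d)
    (f : EuclideanSpace ℝ (Fin d) × EuclideanSpace ℝ (Fin d) → ℝ)
    (hf : ContDiff ℝ (⊤ : ℕ∞) f)
    (W₁ : Set (EuclideanSpace ℝ (Fin d))) (hW₁ : W₁ ∈ nhds (0 : EuclideanSpace ℝ (Fin d)))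
    (hf0 : ∀ t ∈ W₁, f (0, t) = 0)
    (hgrad : ∀ t ∈ W₁, fderiv ℝ (fun x => f (x, t)) 0 = 0)
    (W₂ : Set (EuclideanSpace ℝ (Fin d) × EuclideanSpace ℝ (Fin d)))
    (hW₂ : W₂ ∈ nhds ((0, 0) :
      EuclideanSpace ℝ (Fin d) × EuclideanSpace ℝ (Fin d)))
    (hrank : ∀ p ∈ W₂, (hessX d f p.1 p.2).rank = n)
    (hsymm : (hessX d f 0 0).IsHermitian)
    (m : ℕ) (hm : m = Fintype.card {i : Fin d // 0 < hsymm.eigenvalues i}) :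
    ∃ V W : Set (EuclideanSpace ℝ (Fin d)), IsOpen V ∧ IsOpen W ∧
      (0 : EuclideanSpace ℝ (Fin d)) ∈ V ∧ (0 : EuclideanSpace ℝ (Fin d)) ∈ W ∧
      ∃ τ : EuclideanSpace ℝ (Fin d) × EuclideanSpace ℝ (Fin d) →
          EuclideanSpace ℝ (Fin d),
        ContDiffOn ℝ (⊤ : ℕ∞) τ (V ×ˢ W) ∧
        (∀ t ∈ W, τ (0, t) = 0) ∧
        (∀ x ∈ V, ∀ t ∈ W,
          (Matrix.of fun i j : Fin d =>
            (fderiv ℝ (fun x' => τ (x', t)) x (EuclideanSpace.single j 1)) i).det ≠ 0) ∧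
        (∀ x ∈ V, ∀ t ∈ W, f (x, t) = Qmn d m n (τ (x, t))) :=
  statement15_general hf (Filter.eventually_of_mem hW₁ hf0) (Filter.eventually_of_mem hW₁ hgrad)
    (Filter.eventually_of_mem hW₂ hrank) hsymm hm
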